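/- Let s ∈ (0,1] and let z ∈ ℂ with Re z ≥ 0. Then Re(z^s) ≥ (Re z)^s, where z^s denotes the principal branch of the complex power (with 0^s := 0). -/

import Mathlib

/-!
Writing `z = r * exp (i θ)` with `|θ| ≤ π / 2`, the claim is `r ^ s * cos θ ^ s ≤ r ^ s * cos (s θ)`.
Concavity of `cos` on `[-π/2, π/2]`, applied between `θ` and `0`, gives
`s * cos θ + (1 - s) ≤ cos (s θ)`, and the weighted AM-GM inequality for `cos θ` and `1` gives
`cos θ ^ s ≤ s * cos θ + (1 - s)`.
-/

theorem cos_rpow_le_cos_mul {s θ : ℝ} (hs0 : 0 ≤ s) (hs1 : s ≤ 1) (hθ : |θ| ≤ Real.pi / 2) :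
    Real.cos θ ^ s ≤ Real.cos (θ * s) := by
  have hθ' := abs_le.mp hθ
  have hpi := Real.pi_pos
  have hcos : 0 ≤ Real.cos θ := Real.cos_nonneg_of_mem_Icc hθ'
  have hamgm := Real.geom_mean_le_arith_mean2_weighted hs0 (sub_nonneg.mpr hs1) hcos
    zero_le_one (by ring)
  have hconc := strictConcaveOn_cos_Icc.concaveOn.2 (show θ ∈ _ from hθ')
    (show (0 : ℝ) ∈ Set.Icc (-(Real.pi / 2)) (Real.pi / 2) from ⟨by linarith, by linarith⟩)
    hs0 (sub_nonneg.mpr hs1) (by ring)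
  simp only [smul_eq_mul, Real.cos_zero, mul_zero, add_zero] at hconc
  rw [Real.one_rpow, mul_one] at hamgm
  rw [mul_comm θ s]
  linarith

/-- For `s ∈ (0,1]` and `z ∈ ℂ` with `Re z ≥ 0` one has
`Re (z^s) ≥ (Re z)^s`, where `z^s` is the principal branch of the complex power
(with the convention `0^s = 0`) and `(Re z)^s` is the real power. -/
theorem re_cpow_ge_rpow_re (s : ℝ) (hs : s ∈ Set.Ioc (0 : ℝ) 1)
    (z : ℂ) (hz : 0 ≤ z.re) :
    z.re ^ s ≤ (z ^ (s : ℂ)).re := by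
  have harg : |z.arg| ≤ Real.pi / 2 := Complex.abs_arg_le_pi_div_two_iff.mpr hz
  rw [Complex.cpow_ofReal_re]
  calc z.re ^ s = (‖z‖ * Real.cos z.arg) ^ s := by rw [Complex.norm_mul_cos_arg]
    _ = ‖z‖ ^ s * Real.cos z.arg ^ s :=
        Real.mul_rpow (norm_nonneg z) (Real.cos_nonneg_of_mem_Icc (abs_le.mp harg))
    _ ≤ ‖z‖ ^ s * Real.cos (z.arg * s) :=
        mul_le_mul_of_nonneg_left (cos_rpow_le_cos_mul hs.1.le hs.2 harg)
          (Real.rpow_nonneg (norm_nonneg z) s)
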